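/- arXiv:1711.06777 — 11 statements merged into one kernel-verified Lean document; each statement's English description precedes it below -/
import Mathlib

section
/- For every real number α, the quotient Γ(t+1) / (Γ(t+1−α) · t^α) tends to 1 as the real variable t tends to +∞, where t^α denotes the real power function. -/
/-!
Put `R a t = Γ(t + a) / (Γ(t) t ^ a)`. For `0 < a < 1`, log-convexity of `Γ` together with the
functional equation squeezes `R a t` between `(t / (t + a)) ^ (1 - a)` and `1`
(`gammaShiftRatio_le_one`, `le_gammaShiftRatio`), so `R a t → 1`. The functional equation also gives
`R (a + 1) t = R a t * ((t + a) / t)`, which propagates the limit along `a + ℤ`, hence to every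
real `a` (`tendsto_gammaShiftRatio`). The quotient of the theorem is `1 / R (1 - α) t`.
-/

open Filter Topology

/-- The normalised ratio `Γ(t + a) / (Γ(t) t ^ a)`. -/
noncomputable def gammaShiftRatio (a t : ℝ) : ℝ :=
  Real.Gamma (t + a) / (Real.Gamma t * t ^ a)

/-- Log-convexity of `Γ` at `t + a = (1 - a) t + a (t + 1)`. -/
lemma gammaShiftRatio_le_one {a t : ℝ} (ha : 0 < a) (ha1 : a < 1) (ht : 0 < t) :
    gammaShiftRatio a t ≤ 1 := by
  have hG := Real.Gamma_pos_of_pos ht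
  have h := Real.Gamma_mul_add_mul_le_rpow_Gamma_mul_rpow_Gamma ht (by linarith : 0 < t + 1)
    (by linarith : 0 < 1 - a) ha (by ring)
  rw [show (1 - a) * t + a * (t + 1) = t + a by ring, Real.Gamma_add_one ht.ne',
    Real.mul_rpow ht.le hG.le, mul_left_comm, ← Real.rpow_add hG, sub_add_cancel,
    Real.rpow_one, mul_comm] at h
  exact div_le_one_of_le₀ h (by positivity)

/-- Log-convexity of `Γ` at `t + 1 = a (t + a) + (1 - a) (t + a + 1)`. -/
lemma le_gammaShiftRatio {a t : ℝ} (ha : 0 < a) (ha1 : a < 1) (ht : 0 < t) :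
    (t / (t + a)) ^ (1 - a) ≤ gammaShiftRatio a t := by
  have hG := Real.Gamma_pos_of_pos ht
  have hta : 0 < t + a := by linarith
  have hG' := Real.Gamma_pos_of_pos hta
  have h := Real.Gamma_mul_add_mul_le_rpow_Gamma_mul_rpow_Gamma hta
    (by linarith : 0 < t + a + 1) ha (by linarith : 0 < 1 - a) (by ring)
  rw [show a * (t + a) + (1 - a) * (t + a + 1) = t + 1 by ring, Real.Gamma_add_one ht.ne',
    Real.Gamma_add_one hta.ne', Real.mul_rpow hta.le hG'.le, mul_left_comm,
    ← Real.rpow_add hG', add_sub_cancel, Real.rpow_one] at h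
  have htt : t ^ (1 - a) * t ^ a = t := by
    rw [← Real.rpow_add ht, sub_add_cancel, Real.rpow_one]
  rw [gammaShiftRatio, Real.div_rpow ht.le hta.le, div_le_div_iff₀ (by positivity) (by positivity)]
  calc t ^ (1 - a) * (Real.Gamma t * t ^ a)
      = t ^ (1 - a) * t ^ a * Real.Gamma t := by ring
    _ = t * Real.Gamma t := by rw [htt]
    _ ≤ Real.Gamma (t + a) * (t + a) ^ (1 - a) := by linarith

lemma tendsto_add_div_self (a : ℝ) : Tendsto (fun t : ℝ => (t + a) / t) atTop (𝓝 1) := by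
  have h : Tendsto (fun t : ℝ => 1 + a / t) atTop (𝓝 (1 + 0)) :=
    tendsto_const_nhds.add (tendsto_const_nhds.div_atTop tendsto_id)
  rw [add_zero] at h
  refine h.congr' ?_
  filter_upwards [eventually_gt_atTop 0] with t ht
  field_simp

lemma gammaShiftRatio_add_one {a t : ℝ} (ht : 0 < t) (hta : 0 < t + a) :
    gammaShiftRatio (a + 1) t = gammaShiftRatio a t * ((t + a) / t) := by
  have hG := (Real.Gamma_pos_of_pos ht).ne'
  have hp := (Real.rpow_pos_of_pos ht a).ne'
  rw [gammaShiftRatio, gammaShiftRatio, ← add_assoc, Real.Gamma_add_one hta.ne',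
    Real.rpow_add ht, Real.rpow_one]
  field_simp

lemma tendsto_gammaShiftRatio_add_one_iff (a : ℝ) :
    Tendsto (gammaShiftRatio (a + 1)) atTop (𝓝 1) ↔
      Tendsto (gammaShiftRatio a) atTop (𝓝 1) := by
  have hq := tendsto_add_div_self a
  constructor <;> intro h
  · have h2 := h.div hq one_ne_zero
    rw [div_one] at h2
    refine h2.congr' ?_
    filter_upwards [eventually_gt_atTop 0, eventually_gt_atTop (-a)] with t ht hta
    have hta' : 0 < t + a := by linarith
    simp only [Pi.div_apply]
    rw [gammaShiftRatio_add_one ht hta', mul_div_cancel_right₀ _ (by positivity)]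
  · have h2 := h.mul hq
    rw [mul_one] at h2
    refine h2.congr' ?_
    filter_upwards [eventually_gt_atTop 0, eventually_gt_atTop (-a)] with t ht hta
    exact (gammaShiftRatio_add_one ht (by linarith)).symm

lemma tendsto_gammaShiftRatio_of_lt_one {a : ℝ} (ha : 0 ≤ a) (ha1 : a < 1) :
    Tendsto (gammaShiftRatio a) atTop (𝓝 1) := by
  rcases ha.eq_or_lt with rfl | ha
  · refine tendsto_const_nhds.congr' ?_
    filter_upwards [eventually_gt_atTop 0] with t ht
    simp [gammaShiftRatio, (Real.Gamma_pos_of_pos ht).ne']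
  · have hlow : Tendsto (fun t : ℝ => (t / (t + a)) ^ (1 - a)) atTop (𝓝 1) := by
      have h := ((tendsto_add_div_self a).inv₀ one_ne_zero).rpow_const (p := 1 - a) (by simp)
      simpa using h
    refine tendsto_of_tendsto_of_tendsto_of_le_of_le' hlow tendsto_const_nhds ?_ ?_
    · filter_upwards [eventually_gt_atTop 0] with t ht using le_gammaShiftRatio ha ha1 ht
    · filter_upwards [eventually_gt_atTop 0] with t ht using gammaShiftRatio_le_one ha ha1 ht

lemma tendsto_gammaShiftRatio (a : ℝ) : Tendsto (gammaShiftRatio a) atTop (𝓝 1) := by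
  have key : ∀ n : ℤ, Tendsto (gammaShiftRatio (Int.fract a + n)) atTop (𝓝 1) := by
    intro n
    induction n with
    | zero =>
      simpa using tendsto_gammaShiftRatio_of_lt_one (Int.fract_nonneg a) (Int.fract_lt_one a)
    | succ n ih =>
      have h := (tendsto_gammaShiftRatio_add_one_iff _).2 ih
      push_cast at h ⊢
      rwa [← add_assoc]
    | pred n ih =>
      apply (tendsto_gammaShiftRatio_add_one_iff _).1
      convert ih using 2
      push_cast
      ring
  simpa using key ⌊a⌋

/-- The falling factorial `t^{(α)} = Γ(t+1)/Γ(t+1-α)` is asymptotically the power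
function `t^α`: for every real `α`, `Γ(t+1) / (Γ(t+1-α) · t^α) → 1` as `t → +∞`. -/
theorem gamma_ratio_tendsto_one (α : ℝ) :
    Filter.Tendsto
      (fun t : ℝ => Real.Gamma (t + 1) / (Real.Gamma (t + 1 - α) * t ^ α))
      Filter.atTop (nhds 1) := by
  have h := (tendsto_gammaShiftRatio (1 - α)).inv₀ one_ne_zero
  rw [inv_one] at h
  refine h.congr' ?_
  filter_upwards [eventually_gt_atTop 0] with t ht
  rw [gammaShiftRatio, inv_div, Real.Gamma_add_one ht.ne', Real.rpow_sub ht, Real.rpow_one,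
    ← add_sub_assoc, ← mul_div_assoc, div_div, mul_comm (t ^ α), mul_comm t]
end

section
/- Let f : ℕ → ℝ and define the summation operator S by (S f)(m) = Σ_{s=0}^{m} f(s). Then for every natural number n ≥ 1 and every natural number t ≥ n, the n-fold iterate of S satisfies (Sⁿ f)(t − n) = (1/(n−1)!) · Σ_{s=0}^{t−n} ((t−s−1)! / (t−s−n)!) · f(s). -/
/-!
Iterating `sumOp` amounts to convolving with binomial coefficients:
`(S^(k+1) f)(m) = ∑_{s ≤ m} C(m - s + k, k) f(s)`. This is proved by induction on `k`: one more
summation, after exchanging the order of the double sum, turns the kernel into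
`∑_{i ≤ m - s} C(i + k, k)`, which the hockey-stick identity evaluates to `C(m - s + k + 1, k + 1)`.
With `n = k + 1` and `m = t - n`, the factorial form of the binomial coefficient gives the
Miller–Ross kernel.
-/

/-- The summation operator `(S f)(m) = Σ_{s=0}^{m} f(s)`. -/
noncomputable def sumOp (f : ℕ → ℝ) : ℕ → ℝ := fun m => ∑ s ∈ Finset.range (m + 1), f s

theorem sumOp_iterate_succ (f : ℕ → ℝ) (k m : ℕ) :
    (sumOp^[k + 1] f) m =
      ∑ s ∈ Finset.range (m + 1), ((m - s + k).choose k : ℝ) * f s := by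
  induction k generalizing m with
  | zero => simp [sumOp]
  | succ k ih =>
    rw [Function.iterate_succ_apply']
    change ∑ j ∈ Finset.range (m + 1), (sumOp^[k + 1] f) j = _
    simp only [ih]
    rw [Finset.sum_comm' (s' := fun s => Finset.Ico s (m + 1)) (t' := Finset.range (m + 1))
      (by intro j s; simp only [Finset.mem_range, Finset.mem_Ico]; omega)]
    refine Finset.sum_congr rfl fun s hs => ?_
    rw [← Finset.sum_mul, Finset.sum_Ico_eq_sum_range]
    have hms : m + 1 - s = m - s + 1 := by
      have := Finset.mem_range.mp hs
      omega
    simp only [Nat.add_sub_cancel_left, hms]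
    rw [← Nat.cast_sum, Nat.sum_range_add_choose, add_assoc]

/-- The Miller–Ross fractional sum of integer order `n`,
`(1/(n−1)!) Σ_{s=0}^{t−n} ((t−s−1)!/(t−s−n)!) f(s)`, coincides with the `n`-fold
iterated summation of `f`. -/
theorem iterated_sum_eq_millerRoss (f : ℕ → ℝ) (n t : ℕ) (hn : 1 ≤ n) (ht : n ≤ t) :
    (sumOp^[n] f) (t - n) =
      (1 / (Nat.factorial (n - 1) : ℝ)) *
        ∑ s ∈ Finset.range (t - n + 1),
          ((Nat.factorial (t - s - 1) : ℝ) / (Nat.factorial (t - s - n) : ℝ)) * f s := by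
  obtain ⟨k, rfl⟩ := Nat.exists_eq_add_of_le' hn
  obtain ⟨m, rfl⟩ := Nat.exists_eq_add_of_le' ht
  rw [sumOp_iterate_succ, Finset.mul_sum, Nat.add_sub_cancel]
  refine Finset.sum_congr rfl fun s hs => ?_
  have hsm := Finset.mem_range.mp hs
  have h1 : m + (k + 1) - s - 1 = m - s + k := by omega
  have h2 : m + (k + 1) - s - (k + 1) = m - s := by omega
  rw [h1, h2, Nat.add_sub_cancel, Nat.cast_choose ℝ (Nat.le_add_left k (m - s)),
    Nat.add_sub_cancel]
  field_simp
end

section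
/- Let h > 0, 0 < α < 1, G : ℝ → ℝ, and c₀ ∈ ℝ. For a sequence x : ℕ → ℝ with x₀ = c₀, the following are equivalent: (i) for every n ≥ 0, (h^{1−α}/Γ(1−α)) · Σ_{s=0}^{n} (Γ(n−s+1−α)/Γ(n−s+1)) · ((x_{s+1} − x_s)/h) = −G(x_n); (ii) for every n ≥ 0, x_{n+1} = c₀ − (h^α/Γ(α)) · Σ_{s=0}^{n} (Γ(n−s+α)/Γ(n−s+1)) · G(x_s). -/
/-!
With `A_α = ∑ Γ(k + α) / (Γ(α) k!) X ^ k = (1 - X) ^ (-α)`, and with `D` and `g` the generating series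
of the increments `x (s + 1) - x s` and of `G (x s)`, the difference equation reads
`D * A_{1-α} = -h ^ α g`. By telescoping, the universal map reads
`D * (1 - X)⁻¹ = -h ^ α g * A_α`. Since `A_α * A_{1-α} = (1 - X)⁻¹`, the second identity is
the first one multiplied by `A_α`, which is nonzero in the domain `ℝ⟦X⟧`.

The product formula follows from the differential equation `(1 - X) A_α' = α A_α`, a restatement of
`Γ(k + 1 + α) = (k + α) Γ(k + α)`: the product `P = A_α * A_{1-α}` satisfies `(1 - X) P' = P`,
so all its coefficients equal the constant one, which is `1`.
-/

/-- The series `∑ Γ(k + a) / (Γ(a) k!) X ^ k`, that is `(1 - X) ^ (-a)`, with `k!` written as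
`Γ(k + 1)`. -/
noncomputable def memorySeries (a : ℝ) : PowerSeries ℝ :=
  PowerSeries.mk fun k => (Real.Gamma a)⁻¹ * (Real.Gamma ((k : ℝ) + a) / Real.Gamma ((k : ℝ) + 1))

lemma memorySeries_coeff_succ {a : ℝ} (ha : 0 < a) (k : ℕ) :
    PowerSeries.coeff (k + 1) (memorySeries a) * ((k : ℝ) + 1) =
      ((k : ℝ) + a) * PowerSeries.coeff k (memorySeries a) := by
  have h1 : (0 : ℝ) < (k : ℝ) + 1 := by positivity
  have h2 : (0 : ℝ) < (k : ℝ) + a := by positivity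
  have h3 := (Real.Gamma_pos_of_pos h1).ne'
  have h4 := (Real.Gamma_pos_of_pos ha).ne'
  simp only [memorySeries, PowerSeries.coeff_mk]
  push_cast
  rw [show (k : ℝ) + 1 + a = ((k : ℝ) + a) + 1 by ring, Real.Gamma_add_one h2.ne',
    Real.Gamma_add_one h1.ne']
  field_simp

lemma memorySeries_coeff_zero {a : ℝ} (ha : 0 < a) :
    PowerSeries.coeff 0 (memorySeries a) = 1 := by
  have h4 := (Real.Gamma_pos_of_pos ha).ne'
  simp [memorySeries, h4]

lemma memorySeries_ode {a : ℝ} (ha : 0 < a) :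
    (1 - PowerSeries.X) * PowerSeries.derivative ℝ (memorySeries a) =
      PowerSeries.C a * memorySeries a := by
  ext n
  rw [sub_mul, one_mul, map_sub, PowerSeries.coeff_C_mul, PowerSeries.coeff_derivative,
    memorySeries_coeff_succ ha]
  cases n with
  | zero => simp
  | succ n =>
    rw [PowerSeries.coeff_succ_X_mul, PowerSeries.coeff_derivative]
    push_cast
    ring

lemma memorySeries_mul {a : ℝ} (ha0 : 0 < a) (ha1 : a < 1) :
    memorySeries (1 - a) * memorySeries a = PowerSeries.mk fun _ => 1 := by
  have hb : 0 < 1 - a := by linarith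
  set P := memorySeries (1 - a) * memorySeries a with hP
  have hode : (1 - PowerSeries.X) * PowerSeries.derivative ℝ P = P := by
    have e1 := memorySeries_ode ha0
    have e2 := memorySeries_ode hb
    have e3 : (PowerSeries.C (1 - a) : PowerSeries ℝ) = 1 - PowerSeries.C a := by simp
    rw [e3] at e2
    rw [hP, Derivation.leibniz, smul_eq_mul, smul_eq_mul]
    linear_combination memorySeries (1 - a) * e1 + memorySeries a * e2
  ext n
  rw [PowerSeries.coeff_mk]
  induction n with
  | zero =>
    have h1 := memorySeries_coeff_zero ha0
    have h2 := memorySeries_coeff_zero hb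
    rw [hP, PowerSeries.coeff_mul, Finset.Nat.antidiagonal_zero, Finset.sum_singleton, h1, h2, one_mul]
  | succ n ih =>
    have hn := congrArg (PowerSeries.coeff n) hode
    rw [sub_mul, one_mul, map_sub, PowerSeries.coeff_derivative] at hn
    cases n with
    | zero => simpa [ih] using hn
    | succ m =>
      rw [PowerSeries.coeff_succ_X_mul, PowerSeries.coeff_derivative, ih] at hn
      have hm : ((m : ℝ) + 1 + 1) ≠ 0 := by positivity
      push_cast at hn
      apply mul_right_cancel₀ hm
      linarith

lemma coeff_mk_mul_memorySeries (u : ℕ → ℝ) (a : ℝ) (n : ℕ) :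
    PowerSeries.coeff n (PowerSeries.mk u * memorySeries a) =
      (Real.Gamma a)⁻¹ * ∑ s ∈ Finset.range (n + 1),
        (Real.Gamma (((n - s : ℕ) : ℝ) + a) / Real.Gamma (((n - s : ℕ) : ℝ) + 1)) * u s := by
  rw [PowerSeries.coeff_mul, Finset.Nat.sum_antidiagonal_eq_sum_range_succ_mk, Finset.mul_sum]
  refine Finset.sum_congr rfl fun s _ => ?_
  simp only [memorySeries, PowerSeries.coeff_mk]
  ring

/-- Equivalence of the Caputo-like h-difference equation of order `0 < α < 1`
and the h-difference Caputo universal map with falling-factorial-law memory. -/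
theorem caputo_h_difference_equiv_universal_map
    (h α : ℝ) (hh : 0 < h) (hα0 : 0 < α) (hα1 : α < 1)
    (G : ℝ → ℝ) (c₀ : ℝ) (x : ℕ → ℝ) (hx0 : x 0 = c₀) :
    (∀ n : ℕ,
        (h ^ (1 - α) / Real.Gamma (1 - α)) *
          ∑ s ∈ Finset.range (n + 1),
            (Real.Gamma (((n - s : ℕ) : ℝ) + 1 - α) / Real.Gamma (((n - s : ℕ) : ℝ) + 1)) *
              ((x (s + 1) - x s) / h) = -G (x n))
      ↔
    (∀ n : ℕ,
        x (n + 1) = c₀ -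
          (h ^ α / Real.Gamma α) *
            ∑ s ∈ Finset.range (n + 1),
              (Real.Gamma (((n - s : ℕ) : ℝ) + α) / Real.Gamma (((n - s : ℕ) : ℝ) + 1)) *
                G (x s)) := by
  set D : PowerSeries ℝ := PowerSeries.mk fun s => x (s + 1) - x s with hD
  set g : PowerSeries ℝ := PowerSeries.mk fun s => G (x s) with hg
  have hpos : 0 < h ^ α := Real.rpow_pos_of_pos hh α
  have hi : (∀ n : ℕ,
        (h ^ (1 - α) / Real.Gamma (1 - α)) *
          ∑ s ∈ Finset.range (n + 1),
            (Real.Gamma (((n - s : ℕ) : ℝ) + 1 - α) / Real.Gamma (((n - s : ℕ) : ℝ) + 1)) *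
              ((x (s + 1) - x s) / h) = -G (x n)) ↔
      D * memorySeries (1 - α) = PowerSeries.C (-h ^ α) * g := by
    rw [PowerSeries.ext_iff]
    refine forall_congr' fun n => ?_
    rw [hD, coeff_mk_mul_memorySeries, PowerSeries.coeff_C_mul, hg, PowerSeries.coeff_mk]
    simp only [add_sub_assoc, ← mul_div_assoc]
    rw [← Finset.sum_div, Real.rpow_sub hh, Real.rpow_one]
    generalize Finset.sum (M := ℝ) (Finset.range (n + 1)) _ = S
    have e : h / h ^ α / Real.Gamma (1 - α) * (S / h) =
        ((Real.Gamma (1 - α))⁻¹ * S) / h ^ α := by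
      field_simp
    rw [e, div_eq_iff hpos.ne']
    constructor <;> intro H <;> linarith
  have hii : (∀ n : ℕ,
        x (n + 1) = c₀ -
          (h ^ α / Real.Gamma α) *
            ∑ s ∈ Finset.range (n + 1),
              (Real.Gamma (((n - s : ℕ) : ℝ) + α) / Real.Gamma (((n - s : ℕ) : ℝ) + 1)) *
                G (x s)) ↔
      D * (PowerSeries.mk fun _ => 1) = PowerSeries.C (-h ^ α) * (g * memorySeries α) := by
    rw [PowerSeries.ext_iff]
    refine forall_congr' fun n => ?_
    rw [PowerSeries.coeff_C_mul, hg, coeff_mk_mul_memorySeries, PowerSeries.coeff_mul,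
      Finset.Nat.sum_antidiagonal_eq_sum_range_succ_mk]
    simp only [hD, PowerSeries.coeff_mk, mul_one]
    rw [Finset.sum_range_sub, hx0, div_eq_mul_inv, mul_assoc]
    constructor <;> intro H <;> linarith
  have hA : memorySeries α ≠ 0 := fun H => by
    simpa [H] using memorySeries_coeff_zero hα0
  rw [hi, hii, ← memorySeries_mul hα0 hα1, ← mul_assoc, ← mul_assoc, mul_left_inj' hA]
end

section
/- For every real α with 0 < α < 1, the series Σ_{n=1}^{∞} (Γ(2n−2+α)/Γ(2n−1) − Γ(2n−1+α)/Γ(2n)) converges absolutely, i.e. the sequence n ↦ Γ(2n−2+α)/Γ(2n−1) − Γ(2n−1+α)/Γ(2n) is summable. -/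
/-!
Write `V x = Γ(x + α) / Γ(x + 1)`. The functional equation of `Γ` gives
`V (x + 1) = (x + α) / (x + 1) * V x`, so for `0 < α < 1` the sequence `V 0, V 1, V 2, …` is
positive and decreasing. The terms of the series are `V (2n) - V (2n + 1)`: they are nonnegative
and at most `V (2n) - V (2n + 2)`, so the partial sums telescope and are bounded by `V 0`.
-/

/-- The falling-factorial kernel, indexed from zero: `Γ(x + α) / Γ(x + 1)` is `U_α(x + 1)`. -/
noncomputable def gammaKernel (α x : ℝ) : ℝ := Real.Gamma (x + α) / Real.Gamma (x + 1)

lemma gammaKernel_pos {α x : ℝ} (h0 : 0 < α) (hx : 0 ≤ x) : 0 < gammaKernel α x :=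
  div_pos (Real.Gamma_pos_of_pos (by linarith)) (Real.Gamma_pos_of_pos (by linarith))

lemma gammaKernel_add_one {α x : ℝ} (h0 : 0 < α) (hx : 0 ≤ x) :
    gammaKernel α (x + 1) = (x + α) / (x + 1) * gammaKernel α x := by
  have h : x + 1 + α = x + α + 1 := by ring
  rw [gammaKernel, gammaKernel, h, Real.Gamma_add_one (s := x + α) (by positivity),
    Real.Gamma_add_one (s := x + 1) (by positivity), mul_div_mul_comm]

lemma gammaKernel_add_one_le {α x : ℝ} (h0 : 0 < α) (h1 : α < 1) (hx : 0 ≤ x) :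
    gammaKernel α (x + 1) ≤ gammaKernel α x := by
  rw [gammaKernel_add_one h0 hx]
  refine mul_le_of_le_one_left (gammaKernel_pos h0 hx).le ?_
  rw [div_le_one (by positivity)]
  linarith

/-- For `0 < α < 1`, the series `Σ_{n=1}^{∞} (Γ(2n−2+α)/Γ(2n−1) − Γ(2n−1+α)/Γ(2n))`
(the period-2 series of the falling-factorial memory kernel) converges absolutely. -/
theorem W_alpha_difference_summable (α : ℝ) (h0 : 0 < α) (h1 : α < 1) :
    Summable (fun n : ℕ =>
      Real.Gamma (2 * (n : ℝ) + α) / Real.Gamma (2 * (n : ℝ) + 1) -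
        Real.Gamma (2 * (n : ℝ) + 1 + α) / Real.Gamma (2 * (n : ℝ) + 2)) := by
  have hterm : ∀ n : ℕ, Real.Gamma (2 * (n : ℝ) + α) / Real.Gamma (2 * (n : ℝ) + 1) -
        Real.Gamma (2 * (n : ℝ) + 1 + α) / Real.Gamma (2 * (n : ℝ) + 2) =
      gammaKernel α (2 * (n : ℝ)) - gammaKernel α (2 * (n : ℝ) + 1) := by
    intro n
    have h : 2 * (n : ℝ) + 1 + 1 = 2 * n + 2 := by ring
    rw [gammaKernel, gammaKernel, h]
  simp only [hterm]
  refine summable_of_sum_range_le (c := gammaKernel α 0)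
    (fun n => sub_nonneg.2 (gammaKernel_add_one_le h0 h1 (by positivity))) fun N => ?_
  -- The telescoping bound, kept with its remainder `V (2N)` so that the induction goes through.
  have key : ∑ n ∈ Finset.range N, (gammaKernel α (2 * (n : ℝ)) - gammaKernel α (2 * (n : ℝ) + 1))
      ≤ gammaKernel α 0 - gammaKernel α (2 * (N : ℝ)) := by
    induction N with
    | zero => simp
    | succ k ih =>
      have hstep := gammaKernel_add_one_le (x := 2 * (k : ℝ) + 1) h0 h1 (by positivity)
      have h : 2 * ((k + 1 : ℕ) : ℝ) = 2 * k + 1 + 1 := by push_cast; ring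
      rw [Finset.sum_range_succ, h]
      linarith
  have hpos := gammaKernel_pos (x := 2 * (N : ℝ)) h0 (by positivity)
  linarith
end

section
/- Let 0 < α < 1, b > 0, let G : ℝ → ℝ be continuous, and let x : ℕ → ℝ satisfy x_{n+1} = x₀ − b · Σ_{k=0}^{n} G(x_k) · (n−k+1)^{α−1} for all n ≥ 0. Suppose the odd subsequence x_{2n+1} converges to x_o and the even subsequence x_{2n} converges to x_e as n → ∞. Then x_o − x_e = b · (G(x_o) − G(x_e)) · W_α, where W_α = Σ_{n=1}^{∞} ((2n−1)^{α−1} − (2n)^{α−1}). -/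
/-!
Subtracting the recursion at consecutive indices gives
`x (n + 1) - x n = -b * ∑ j ≤ n, a j * G (x (n - j))`, where `a j = (j + 1) ^ (α - 1) - j ^ (α - 1)`
is the increment of the kernel. Unlike the kernel itself, the increments are absolutely summable,
since they telescope (`summable_increment`), and `G ∘ x` is bounded. Hence dominated convergence
applies along `n = 2 * N` (`tendsto_even_convolution`): even lags `j` see `G xe`, odd lags `G xo`, so
`xo - xe = -b * (G xe * ∑ a (2 m) + G xo * ∑ a (2 m + 1))`.
The odd increments sum to `-W_α` by definition, and as all increments together telescope to `0`
(`tsum_increment`), the even ones sum to `W_α`.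
-/

open Filter Topology

/-- The increment `(j + 1) ^ (α - 1) - j ^ (α - 1)` of the power-law kernel. For `α < 1` the
convention `0 ^ (α - 1) = 0` makes `kernelIncrement α 0 = 1`, so that the kernel is extended by
zero at lag `0`. -/
noncomputable def kernelIncrement (α : ℝ) (j : ℕ) : ℝ :=
  ((j : ℝ) + 1) ^ (α - 1) - (j : ℝ) ^ (α - 1)

lemma sum_increment {α : ℝ} (h1 : α < 1) (n : ℕ) :
    ∑ j ∈ Finset.range n, kernelIncrement α j = (n : ℝ) ^ (α - 1) := by
  have h := Finset.sum_range_sub (fun j : ℕ => (j : ℝ) ^ (α - 1)) n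
  have hz : (0 : ℝ) ^ (α - 1) = 0 := Real.zero_rpow (by linarith)
  simpa [kernelIncrement, hz] using h

lemma increment_succ_nonpos {α : ℝ} (h1 : α < 1) (j : ℕ) : kernelIncrement α (j + 1) ≤ 0 := by
  have h : ((j + 1 : ℕ) : ℝ) + 1 ≥ ((j + 1 : ℕ) : ℝ) := by linarith
  have := Real.rpow_le_rpow_of_nonpos (z := α - 1)
    (by positivity : (0 : ℝ) < ((j + 1 : ℕ) : ℝ)) h (by linarith)
  unfold kernelIncrement
  linarith

lemma summable_increment {α : ℝ} (h1 : α < 1) : Summable (kernelIncrement α) := by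
  rw [← summable_nat_add_iff 1, ← summable_neg_iff]
  refine summable_of_sum_range_le (c := kernelIncrement α 0)
    (fun j => neg_nonneg.2 (increment_succ_nonpos h1 j)) fun n => ?_
  have h := sum_increment h1 (n + 1)
  rw [Finset.sum_range_succ'] at h
  have hp : (0 : ℝ) ≤ ((n + 1 : ℕ) : ℝ) ^ (α - 1) := by positivity
  simp only [Finset.sum_neg_distrib]
  linarith

lemma tsum_increment {α : ℝ} (h1 : α < 1) : ∑' j, kernelIncrement α j = 0 := by
  refine tendsto_nhds_unique (summable_increment h1).hasSum.tendsto_sum_nat ?_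
  simp only [sum_increment h1]
  have h := (tendsto_rpow_neg_atTop (y := 1 - α) (by linarith)).comp
    (tendsto_natCast_atTop_atTop (R := ℝ))
  simpa [Function.comp_def] using h

/-- Convolving a summable sequence with a sequence whose even and odd parts converge: along even
indices, even lags pick up the even limit and odd lags the odd one. -/
lemma tendsto_even_convolution {a g : ℕ → ℝ} (ha : Summable a) {go ge : ℝ}
    (ho : Tendsto (fun n : ℕ => g (2 * n + 1)) atTop (𝓝 go))
    (he : Tendsto (fun n : ℕ => g (2 * n)) atTop (𝓝 ge)) :
    Tendsto (fun N : ℕ => ∑ j ∈ Finset.range (2 * N + 1), a j * g (2 * N - j)) atTop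
      (𝓝 (∑' m, a (2 * m) * ge + ∑' m, a (2 * m + 1) * go)) := by
  obtain ⟨C, hC⟩ : ∃ C, ∀ n, |g n| ≤ C := by
    obtain ⟨A, hA⟩ := (Metric.isBounded_range_of_tendsto _ ho).exists_norm_le
    obtain ⟨B, hB⟩ := (Metric.isBounded_range_of_tendsto _ he).exists_norm_le
    refine ⟨max A B, fun n => ?_⟩
    rcases Nat.even_or_odd' n with ⟨k, rfl | rfl⟩
    · exact (hB _ ⟨k, rfl⟩).trans (le_max_right _ _)
    · exact (hA _ ⟨k, rfl⟩).trans (le_max_left _ _)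
  have hinj : Function.Injective fun m : ℕ => 2 * m := fun _ _ h => by simpa using h
  have hinj' : Function.Injective fun m : ℕ => 2 * m + 1 := fun _ _ h => by simpa using h
  have hsplit : ∑' m, a (2 * m) * ge + ∑' m, a (2 * m + 1) * go
      = ∑' j, a j * (if Even j then ge else go) := by
    rw [← tsum_even_add_odd (f := fun j => a j * (if Even j then ge else go))]
    · simp
    · simpa [Function.comp_def] using (ha.comp_injective hinj).mul_right ge
    · simpa [Function.comp_def] using (ha.comp_injective hinj').mul_right go
  have hsum : ∀ N : ℕ, ∑ j ∈ Finset.range (2 * N + 1), a j * g (2 * N - j)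
      = ∑' j, if j ≤ 2 * N then a j * g (2 * N - j) else 0 := fun N => by
    rw [tsum_eq_sum (s := Finset.range (2 * N + 1))]
    · exact Finset.sum_congr rfl fun j hj => by
        rw [if_pos (by have := Finset.mem_range.1 hj; omega)]
    · intro j hj
      rw [if_neg (by have := mt Finset.mem_range.2 hj; omega)]
  simp only [hsum, hsplit]
  refine tendsto_tsum_of_dominated_convergence (bound := fun j => |a j| * C)
    (ha.abs.mul_right C) (fun j => ?_) (Eventually.of_forall fun N j => ?_)
  · have hlag : Tendsto (fun N : ℕ => g (2 * N - j)) atTop (𝓝 (if Even j then ge else go)) := by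
      rcases Nat.even_or_odd' j with ⟨k, rfl | rfl⟩
      · rw [if_pos (by simp)]
        refine (he.comp (tendsto_sub_atTop_nat k)).congr fun N => ?_
        simp [Nat.mul_sub]
      · rw [if_neg (by simp)]
        refine (ho.comp (tendsto_sub_atTop_nat (k + 1))).congr' ?_
        filter_upwards [eventually_ge_atTop (k + 1)] with N hN
        simp only [Function.comp_apply]
        congr 1
        omega
    refine (hlag.const_mul (a j)).congr' ?_
    filter_upwards [eventually_ge_atTop j] with N hN
    rw [if_pos (by omega)]
  · split_ifs
    · rw [norm_mul]
      exact mul_le_mul_of_nonneg_left (hC _) (norm_nonneg _)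
    · simpa using mul_nonneg (abs_nonneg (a j)) ((abs_nonneg _).trans (hC 0))

/-- For the universal fractional map of order `0 < α < 1` with power-law memory kernel
`U_α(n) = n^{α−1}`, an asymptotic period-2 sink `(x_o, x_e)` satisfies
`x_o − x_e = b (G(x_o) − G(x_e)) W_α` with `W_α = Σ_{n=1}^∞ ((2n−1)^{α−1} − (2n)^{α−1})`. -/
theorem period_two_difference_eq (α b : ℝ) (h0 : 0 < α) (h1 : α < 1) (hb : 0 < b)
    (G : ℝ → ℝ) (hG : Continuous G) (x : ℕ → ℝ)
    (hx : ∀ n : ℕ, x (n + 1) = x 0 -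
      b * ∑ k ∈ Finset.range (n + 1), G (x k) * (((n - k : ℕ) : ℝ) + 1) ^ (α - 1))
    (xo xe : ℝ)
    (ho : Filter.Tendsto (fun n : ℕ => x (2 * n + 1)) Filter.atTop (nhds xo))
    (he : Filter.Tendsto (fun n : ℕ => x (2 * n)) Filter.atTop (nhds xe)) :
    xo - xe = b * (G xo - G xe) *
      ∑' n : ℕ, ((2 * (n : ℝ) + 1) ^ (α - 1) - (2 * (n : ℝ) + 2) ^ (α - 1)) := by
  have hz : (0 : ℝ) ^ (α - 1) = 0 := Real.zero_rpow (by linarith)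
  -- The recursion in a form that also holds at index `0`, thanks to `0 ^ (α - 1) = 0`.
  have hx' : ∀ n : ℕ, x n = x 0 -
      b * ∑ k ∈ Finset.range (n + 1), G (x k) * ((n - k : ℕ) : ℝ) ^ (α - 1) := by
    rintro (_ | n)
    · simp [hz]
    · rw [Finset.sum_range_succ, hx n]
      simp only [Nat.sub_self, Nat.cast_zero, hz, mul_zero, add_zero]
      congr 2
      refine Finset.sum_congr rfl fun k hk => ?_
      rw [Nat.succ_sub (Nat.lt_succ_iff.1 (Finset.mem_range.1 hk)), Nat.cast_succ]
  have hdiff : ∀ n : ℕ, x (n + 1) - x n =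
      -b * ∑ j ∈ Finset.range (n + 1), kernelIncrement α j * G (x (n - j)) := by
    intro n
    have hr : ∑ j ∈ Finset.range (n + 1), kernelIncrement α j * G (x (n - j))
        = ∑ k ∈ Finset.range (n + 1), kernelIncrement α (n - k) * G (x k) := by
      rw [← Finset.sum_range_reflect]
      refine Finset.sum_congr rfl fun k hk => ?_
      have := Finset.mem_range.1 hk
      rw [show n + 1 - 1 - k = n - k by omega, show n - (n - k) = k by omega]
    have hs : ∑ k ∈ Finset.range (n + 1), kernelIncrement α (n - k) * G (x k)
        = ∑ k ∈ Finset.range (n + 1), G (x k) * (((n - k : ℕ) : ℝ) + 1) ^ (α - 1)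
          - ∑ k ∈ Finset.range (n + 1), G (x k) * ((n - k : ℕ) : ℝ) ^ (α - 1) := by
      rw [← Finset.sum_sub_distrib]
      refine Finset.sum_congr rfl fun k _ => ?_
      unfold kernelIncrement
      ring
    rw [hr, hs]
    linear_combination hx n - hx' n
  have hlim := (tendsto_even_convolution (g := fun n => G (x n)) (summable_increment h1)
    ((hG.tendsto xo).comp ho) ((hG.tendsto xe).comp he)).const_mul (-b)
  have key := tendsto_nhds_unique (ho.sub he) (hlim.congr fun N => (hdiff (2 * N)).symm)
  have hodd : ∑' n : ℕ, ((2 * (n : ℝ) + 1) ^ (α - 1) - (2 * (n : ℝ) + 2) ^ (α - 1))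
      = -∑' m : ℕ, kernelIncrement α (2 * m + 1) := by
    rw [← tsum_neg]
    refine tsum_congr fun m => ?_
    unfold kernelIncrement
    push_cast
    rw [show 2 * (m : ℝ) + 1 + 1 = 2 * m + 2 by ring]
    ring
  have heven : ∑' m : ℕ, kernelIncrement α (2 * m) + ∑' m : ℕ, kernelIncrement α (2 * m + 1)
      = 0 := by
    rw [← tsum_increment h1]
    exact tsum_even_add_odd
      ((summable_increment h1).comp_injective fun _ _ h => by simpa using h)
      ((summable_increment h1).comp_injective fun _ _ h => by simpa using h)
  rw [key, hodd, tsum_mul_right, tsum_mul_right, eq_neg_of_add_eq_zero_left heven]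
  ring
end

section
/- Let 0 < α < 1, b > 0, let G : ℝ → ℝ be continuous, and let x : ℕ → ℝ satisfy x_{n+1} = x₀ − b · Σ_{k=0}^{n} G(x_k) · (n−k+1)^{α−1} for all n ≥ 0. Suppose the odd subsequence x_{2n+1} converges to x_o and the even subsequence x_{2n} converges to x_e as n → ∞. Then G(x_o) + G(x_e) = 0. -/
/-!
Write `g k = G (x k)` and `w j = (j + 1) ^ (α - 1)`, so that the recursion reads
`b * ∑ k ≤ n, g k * w (n - k) = x 0 - x (n + 1)`. Adding the recursions for `n` and `n + 1` and
shifting the index in the second one turns the left side into `b` times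
`∑ k ≤ n, (g k + g (k + 1)) * w (n - k) + g 0 * w (n + 1)`, while the right side
converges because `x n + x (n + 1) → xo + xe`. Since `w → 0`, the convolution of `g k + g (k + 1)`
with `w` converges. But `g k + g (k + 1) → G xo + G xe` and `∑ w` diverges (as `α > 0`), so a
nonzero limit would force that convolution to `±∞` (`tendsto_conv_atTop`).
-/

open Filter Topology

lemma tendsto_add_succ_of_even_odd {y : ℕ → ℝ} {p q : ℝ}
    (ho : Tendsto (fun n : ℕ => y (2 * n + 1)) atTop (𝓝 p))
    (he : Tendsto (fun n : ℕ => y (2 * n)) atTop (𝓝 q)) :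
    Tendsto (fun n => y n + y (n + 1)) atTop (𝓝 (p + q)) := by
  have h1 : Tendsto (fun n : ℕ => y (2 * n) + y (2 * n + 1)) atTop (𝓝 (p + q)) := by
    simpa only [add_comm p q] using he.add ho
  have h2 : Tendsto (fun n : ℕ => y (2 * n + 1) + y (2 * n + 1 + 1)) atTop (𝓝 (p + q)) :=
    ho.add (he.comp (tendsto_add_atTop_nat 1))
  rw [Metric.tendsto_atTop] at h1 h2 ⊢
  intro ε hε
  obtain ⟨N, hN⟩ := h1 ε hε
  obtain ⟨M, hM⟩ := h2 ε hε
  refine ⟨2 * N + 2 * M, fun n hn => ?_⟩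
  obtain ⟨m, rfl | rfl⟩ := Nat.even_or_odd' n
  · exact hN m (by omega)
  · exact hM m (by omega)

/-- The convolution of a sequence with positive limit and a bounded nonnegative kernel of divergent
sum tends to infinity: the finitely many terms where `u` is not yet close to its limit contribute
a bounded amount. -/
lemma tendsto_conv_atTop {u w : ℕ → ℝ} {c : ℝ} (hc : 0 < c) (hu : Tendsto u atTop (𝓝 c))
    (hw0 : ∀ j, 0 ≤ w j) (hw1 : ∀ j, w j ≤ 1) (hw : ¬ Summable w) :
    Tendsto (fun n => ∑ k ∈ Finset.range (n + 1), u k * w (n - k)) atTop atTop := by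
  obtain ⟨N, hN⟩ := eventually_atTop.1 (hu.eventually (lt_mem_nhds (half_lt_self hc)))
  have hdiv : Tendsto (fun m => ∑ j ∈ Finset.range (m + 1), w j) atTop atTop :=
    ((not_summable_iff_tendsto_nat_atTop_of_nonneg hw0).1 hw).comp (tendsto_add_atTop_nat 1)
  rw [← tendsto_add_atTop_iff_nat N]
  have hlow : Tendsto (fun m => (-∑ k ∈ Finset.range N, |u k|) +
      c / 2 * ∑ j ∈ Finset.range (m + 1), w j) atTop atTop :=
    tendsto_atTop_add_const_left _ _ (hdiv.const_mul_atTop (half_pos hc))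
  refine tendsto_atTop_mono (fun m => ?_) hlow
  rw [show m + N + 1 = N + (m + 1) by ring, Finset.sum_range_add _ N (m + 1)]
  apply add_le_add
  · rw [← Finset.sum_neg_distrib]
    refine Finset.sum_le_sum fun k _ => (neg_le_of_abs_le ?_)
    rw [abs_mul, abs_of_nonneg (hw0 _)]
    exact mul_le_of_le_one_right (abs_nonneg _) (hw1 _)
  · rw [← Finset.sum_range_reflect, Finset.mul_sum]
    refine Finset.sum_le_sum fun j _ => ?_
    rw [show m + N - (N + j) = m + 1 - 1 - j by omega]
    exact mul_le_mul_of_nonneg_right (hN _ (by omega)).le (hw0 _)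

lemma limit_eq_zero_of_conv_tendsto {u w : ℕ → ℝ} {c l : ℝ} (hu : Tendsto u atTop (𝓝 c))
    (hw0 : ∀ j, 0 ≤ w j) (hw1 : ∀ j, w j ≤ 1) (hw : ¬ Summable w)
    (hl : Tendsto (fun n => ∑ k ∈ Finset.range (n + 1), u k * w (n - k)) atTop (𝓝 l)) :
    c = 0 := by
  rcases lt_trichotomy c 0 with hc | hc | hc
  · have h := tendsto_conv_atTop (neg_pos.2 hc) hu.neg hw0 hw1 hw
    simp only [neg_mul, Finset.sum_neg_distrib] at h
    exact (not_tendsto_nhds_of_tendsto_atTop h _ hl.neg).elim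
  · exact hc
  · exact (not_tendsto_nhds_of_tendsto_atTop (tendsto_conv_atTop hc hu hw0 hw1 hw) _ hl).elim

/-- For the universal fractional map of order `0 < α < 1` with power-law memory kernel
`U_α(n) = n^{α−1}`, an asymptotic period-2 sink `(x_o, x_e)` satisfies
`G(x_o) + G(x_e) = 0`. -/
theorem period_two_sum_eq_zero (α b : ℝ) (h0 : 0 < α) (h1 : α < 1) (hb : 0 < b)
    (G : ℝ → ℝ) (hG : Continuous G) (x : ℕ → ℝ)
    (hx : ∀ n : ℕ, x (n + 1) = x 0 -
      b * ∑ k ∈ Finset.range (n + 1), G (x k) * (((n - k : ℕ) : ℝ) + 1) ^ (α - 1))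
    (xo xe : ℝ)
    (ho : Filter.Tendsto (fun n : ℕ => x (2 * n + 1)) Filter.atTop (nhds xo))
    (he : Filter.Tendsto (fun n : ℕ => x (2 * n)) Filter.atTop (nhds xe)) :
    G xo + G xe = 0 := by
  set w : ℕ → ℝ := fun j => ((j : ℝ) + 1) ^ (α - 1) with hw_def
  have hw0 : ∀ j, 0 ≤ w j := fun j => by positivity
  have hw1 : ∀ j, w j ≤ 1 := fun j =>
    Real.rpow_le_one_of_one_le_of_nonpos (by simp) (by linarith)
  have hw : ¬ Summable w := by
    intro h
    have h' : Summable fun j : ℕ => ((j + 1 : ℕ) : ℝ) ^ (α - 1) := by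
      simpa only [Nat.cast_add, Nat.cast_one] using h
    have := Real.summable_nat_rpow.1
      ((summable_nat_add_iff (f := fun j : ℕ => (j : ℝ) ^ (α - 1)) 1).1 h')
    linarith
  have hwlim : Tendsto (fun n => w (n + 1)) atTop (𝓝 0) := by
    have h := (tendsto_rpow_neg_atTop (sub_pos.2 h1)).comp
      (tendsto_natCast_atTop_atTop.comp (tendsto_add_atTop_nat 2))
    refine h.congr fun n => ?_
    simp only [hw_def, Function.comp_apply, neg_sub]
    congr 1
    push_cast
    ring
  have hg : Tendsto (fun n => G (x n) + G (x (n + 1))) atTop (𝓝 (G xo + G xe)) :=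
    tendsto_add_succ_of_even_odd (y := fun n => G (x n))
      ((hG.tendsto xo).comp ho) ((hG.tendsto xe).comp he)
  have hxx : Tendsto (fun n => x (n + 1) + x (n + 1 + 1)) atTop (𝓝 (xo + xe)) :=
    (tendsto_add_succ_of_even_odd ho he).comp (tendsto_add_atTop_nat 1)
  have key : ∀ n, ∑ k ∈ Finset.range (n + 1), (G (x k) + G (x (k + 1))) * w (n - k)
      = (2 * x 0 - (x (n + 1) + x (n + 1 + 1))) / b - G (x 0) * w (n + 1) := by
    intro n
    have e1 : x (n + 1) = x 0 - b * ∑ k ∈ Finset.range (n + 1), G (x k) * w (n - k) := hx n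
    have e2 : x (n + 1 + 1)
        = x 0 - b * ∑ k ∈ Finset.range (n + 1 + 1), G (x k) * w (n + 1 - k) := hx (n + 1)
    rw [Finset.sum_range_succ'] at e2
    simp only [Nat.add_sub_add_right, Nat.sub_zero] at e2
    simp only [add_mul, Finset.sum_add_distrib]
    rw [e1, e2]
    field_simp
    ring
  refine limit_eq_zero_of_conv_tendsto hg hw0 hw1 hw
    (l := (2 * x 0 - (xo + xe)) / b - G (x 0) * 0) ?_
  simp only [key]
  exact ((hxx.const_sub _).div_const b).sub (hwlim.const_mul _)
end

section
/- Let 1 < α < 2. Define U_α(n) = Γ(n+α−1)/Γ(n) for integers n ≥ 1 and U_α(0) = 0, and Ũ_α(n) = U_α(n) − U_α(n−1) for n ≥ 1. Then Σ_{n=1}^{∞} (Ũ_α(2n−1) − Ũ_α(2n)) = (α−1) · Σ_{n=1}^{∞} (U_{α−1}(2n−1) − U_{α−1}(2n)); in particular both series converge. -/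
/-!
The identity holds term by term: `Γ(x + 1) = x Γ(x)` gives
`U_α(n + 1) - U_α(n) = (α - 1) U_{α-1}(n + 1)` for every `n`, including `n = 0` thanks to the
convention `U_α(0) = 0` (`Ukern_succ_sub`). For convergence, `U_{α-1}` is positive and
decreasing on the positive integers (`Ukern_pos`, `Ukern_step_le`), so the terms
`U_{α-1}(2n+1) - U_{α-1}(2n+2)` are nonnegative and their partial sums are at most `U_{α-1}(1)`.
-/

/-- The falling-factorial memory kernel `U_α(n) = Γ(n+α−1)/Γ(n)` of fractional
difference maps, with the convention `U_α(0) = 0`. -/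
noncomputable def Ukern (α : ℝ) : ℕ → ℝ
  | 0 => 0
  | (n + 1) => Real.Gamma (((n + 1 : ℕ) : ℝ) + α - 1) / Real.Gamma ((n + 1 : ℕ) : ℝ)

lemma Ukern_succ_sub (α : ℝ) (h1 : 1 < α) (n : ℕ) :
    Ukern α (n + 1) - Ukern α n = (α - 1) * Ukern (α - 1) (n + 1) := by
  rcases n with _ | m
  · have h := Real.Gamma_add_one (s := α - 1) (by linarith)
    rw [sub_add_cancel] at h
    simp [Ukern, h]
  · have hm : (0 : ℝ) < (m : ℝ) + 1 := by positivity
    have hG := (Real.Gamma_pos_of_pos hm).ne'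
    have e1 := Real.Gamma_add_one (s := (m : ℝ) + α) (by linarith)
    have e2 := Real.Gamma_add_one hm.ne'
    simp only [Ukern]
    push_cast
    rw [show (m : ℝ) + 1 + 1 + α - 1 = m + α + 1 by ring,
      show (m : ℝ) + 1 + α - 1 = m + α by ring,
      show (m : ℝ) + 1 + 1 + (α - 1) - 1 = m + α by ring, e1, e2]
    field_simp
    ring

lemma Ukern_pos (β : ℝ) (hβ : 0 < β) (n : ℕ) : 0 < Ukern β (n + 1) := by
  have hn : (0 : ℝ) ≤ n := n.cast_nonneg
  simp only [Ukern]
  push_cast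
  exact div_pos (Real.Gamma_pos_of_pos (by linarith)) (Real.Gamma_pos_of_pos (by linarith))

/-- The kernel of order `β ≤ 1` decreases, because `U_β(n+2) / U_β(n+1) = (n + β) / (n + 1)`. -/
lemma Ukern_step_le (β : ℝ) (hβ : 0 < β) (hβ' : β ≤ 1) (n : ℕ) :
    Ukern β (n + 2) ≤ Ukern β (n + 1) := by
  have hn : (0 : ℝ) ≤ n := n.cast_nonneg
  have hp := Ukern_pos β hβ n
  have hm : (0 : ℝ) < (n : ℝ) + 1 := by positivity
  have hG := (Real.Gamma_pos_of_pos hm).ne'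
  have key : Ukern β (n + 2) = (n + β) / (n + 1) * Ukern β (n + 1) := by
    have e1 := Real.Gamma_add_one (s := (n : ℝ) + β) (by linarith)
    have e2 := Real.Gamma_add_one hm.ne'
    simp only [Ukern]
    push_cast
    rw [show (n : ℝ) + 1 + 1 + β - 1 = n + β + 1 by ring,
      show (n : ℝ) + 1 + β - 1 = n + β by ring, e1, e2]
    field_simp
  rw [key]
  exact mul_le_of_le_one_left hp.le ((div_le_one hm).2 (by linarith))

lemma summable_Ukern_sub (β : ℝ) (hβ : 0 < β) (hβ' : β ≤ 1) :
    Summable (fun n : ℕ => Ukern β (2 * n + 1) - Ukern β (2 * n + 2)) := by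
  -- Discarding the gaps `U(2n+2) - U(2n+3) ≥ 0` makes the partial sums telescope.
  have bound : ∀ N : ℕ, ∑ n ∈ Finset.range N, (Ukern β (2 * n + 1) - Ukern β (2 * n + 2)) ≤
      Ukern β 1 - Ukern β (2 * N + 1) := by
    intro N
    induction N with
    | zero => simp
    | succ k ih =>
      rw [Finset.sum_range_succ]
      have h : Ukern β (2 * (k + 1) + 1) ≤ Ukern β (2 * k + 2) :=
        Ukern_step_le β hβ hβ' (2 * k + 1)
      linarith
  exact summable_of_sum_range_le (c := Ukern β 1)
    (fun n => sub_nonneg.2 (Ukern_step_le β hβ hβ' (2 * n)))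
    (fun N => (bound N).trans (by linarith [Ukern_pos β hβ (2 * N)]))

/-- For `1 < α < 2`, with `Ũ_α(n) = U_α(n) − U_α(n−1)`, the series
`Σ_{n=1}^∞ (Ũ_α(2n−1) − Ũ_α(2n))` equals `(α−1) Σ_{n=1}^∞ (U_{α−1}(2n−1) − U_{α−1}(2n))`;
in particular both series converge. -/
theorem Wtilde_eq_alpha_sub_one_mul_W (α : ℝ) (h1 : 1 < α) (h2 : α < 2) :
    Summable (fun n : ℕ =>
      (Ukern α (2 * n + 1) - Ukern α (2 * n)) - (Ukern α (2 * n + 2) - Ukern α (2 * n + 1))) ∧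
    Summable (fun n : ℕ => Ukern (α - 1) (2 * n + 1) - Ukern (α - 1) (2 * n + 2)) ∧
    (∑' n : ℕ,
        ((Ukern α (2 * n + 1) - Ukern α (2 * n)) - (Ukern α (2 * n + 2) - Ukern α (2 * n + 1))))
      = (α - 1) * ∑' n : ℕ, (Ukern (α - 1) (2 * n + 1) - Ukern (α - 1) (2 * n + 2)) := by
  have hS := summable_Ukern_sub (α - 1) (by linarith) (by linarith)
  have hterm : ∀ n : ℕ,
      (Ukern α (2 * n + 1) - Ukern α (2 * n)) - (Ukern α (2 * n + 2) - Ukern α (2 * n + 1)) =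
        (α - 1) * (Ukern (α - 1) (2 * n + 1) - Ukern (α - 1) (2 * n + 2)) := fun n => by
    rw [Ukern_succ_sub α h1 (2 * n), Ukern_succ_sub α h1 (2 * n + 1), mul_sub]
  simp only [hterm]
  exact ⟨hS.mul_left _, hS, tsum_mul_left⟩
end

section
/- Let 1 < α < 2, h > 0, b₀, p₀ ∈ ℝ, let G : ℝ → ℝ be continuous, and let x : ℕ → ℝ satisfy x_{n+1} = b₀ + p₀ · h · (n+1) − (h^α/Γ(α)) · Σ_{k=0}^{n} G(x_k) · (n−k+1)^{α−1} for all n ≥ 0. Suppose the odd subsequence x_{2n+1} converges to x_o and the even subsequence x_{2n} converges to x_e as n → ∞. Then x_o − x_e = (h^α/(2Γ(α))) · (G(x_o) − G(x_e)) · W̃_α, where W̃_α = Σ_{n=1}^{∞} (−1)^{n+1} (n^{α−1} − (n−1)^{α−1}) (with 0^{α−1} = 0). -/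
/-!
Write `p i = i ^ (α - 1)`, `g k = G (x k)` and let `u j = p (j + 1) - 2 p j + p (j - 1)` be the
second difference of the kernel, with `u 0 = 1`. Taking second differences of the recursion kills
the affine drift and gives
`x (n + 3) - 2 x (n + 2) + x (n + 1) = -(h ^ α / Γ(α)) ∑_{j ≤ n + 2} g (n + 2 - j) u j`
(`second_diff_conv`).

Along `n = 2 r` the left side tends to `2 (xo - xe)`. On the right, `p` is concave, so its first
differences `w` decrease to `0` and `u` is absolutely summable (`hasSum_kernel`); as `g` is
bounded, dominated convergence (`tendsto_conv_even`) gives the limit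
`∑ u j * (G xe if j is even, G xo if j is odd)`. Since `∑ u j = 0` and `∑ (-1) ^ j u j = 2 W`,
this limit is `(G xe - G xo) W`, which is the claim.
-/

open Filter Topology Finset

/-- The second difference of `p`. For `p 0 = 0` the truncated subtraction at `j = 0` is harmless:
it amounts to extending `p` by zero to negative indices. -/
def kerDiff (p : ℕ → ℝ) (j : ℕ) : ℝ := p (j + 1) - 2 * p j + p (j - 1)

/-- Second differences in `n` of the convolution `∑ k ≤ n, g k * p (n - k + 1)` fall on `p`. -/
lemma second_diff_conv (p g : ℕ → ℝ) (hp : p 0 = 0) (n : ℕ) :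
    (∑ k ∈ range (n + 3), g k * p (n + 2 - k + 1))
      - 2 * (∑ k ∈ range (n + 2), g k * p (n + 1 - k + 1))
      + (∑ k ∈ range (n + 1), g k * p (n - k + 1))
      = ∑ j ∈ range (n + 3), g (n + 2 - j) * kerDiff p j := by
  have h1 : ∑ k ∈ range (n + 2), g k * p (n + 1 - k + 1)
      = ∑ k ∈ range (n + 3), g k * p (n + 2 - k) := by
    rw [sum_range_succ _ (n + 2), Nat.sub_self, hp, mul_zero, add_zero]
    refine sum_congr rfl fun k hk => ?_
    rw [mem_range] at hk
    rw [show n + 1 - k + 1 = n + 2 - k by omega]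
  have h0 : ∑ k ∈ range (n + 1), g k * p (n - k + 1)
      = ∑ k ∈ range (n + 3), g k * p (n + 2 - k - 1) := by
    rw [sum_range_succ _ (n + 2), sum_range_succ _ (n + 1),
      show n + 2 - (n + 2) - 1 = 0 by omega, show n + 2 - (n + 1) - 1 = 0 by omega, hp,
      mul_zero, add_zero, mul_zero, add_zero]
    refine sum_congr rfl fun k hk => ?_
    rw [mem_range] at hk
    rw [show n - k + 1 = n + 2 - k - 1 by omega]
  rw [h1, h0, ← sum_range_reflect (fun j => g (n + 2 - j) * kerDiff p j), mul_sum,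
    ← sum_sub_distrib, ← sum_add_distrib]
  refine sum_congr rfl fun k hk => ?_
  rw [mem_range] at hk
  rw [show n + 3 - 1 - k = n + 2 - k by omega, show n + 2 - (n + 2 - k) = k by omega, kerDiff]
  ring

/-- Dominated convergence for the convolution of a summable kernel with a sequence that is
asymptotically of period two. -/
lemma tendsto_conv_even (u f : ℕ → ℝ) (a b : ℝ) (hu : Summable fun j => |u j|)
    (ha : Tendsto (fun n => f (2 * n)) atTop (𝓝 a))
    (hb : Tendsto (fun n => f (2 * n + 1)) atTop (𝓝 b)) :
    Tendsto (fun r : ℕ => ∑ j ∈ range (2 * r + 3), f (2 * r + 2 - j) * u j) atTop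
      (𝓝 (∑' j, (if Even j then a else b) * u j)) := by
  obtain ⟨C, hC⟩ : ∃ C, ∀ n, |f n| ≤ C := by
    obtain ⟨A, hA⟩ := (Metric.isBounded_range_of_tendsto _ ha).exists_norm_le
    obtain ⟨B, hB⟩ := (Metric.isBounded_range_of_tendsto _ hb).exists_norm_le
    refine ⟨max A B, fun n => ?_⟩
    rcases Nat.even_or_odd' n with ⟨i, rfl | rfl⟩
    · exact (hA _ ⟨i, rfl⟩).trans (le_max_left _ _)
    · exact (hB _ ⟨i, rfl⟩).trans (le_max_right _ _)
  have hC0 : 0 ≤ C := (abs_nonneg _).trans (hC 0)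
  have key : Tendsto (fun r : ℕ => ∑' j, if j ∈ range (2 * r + 3) then
      f (2 * r + 2 - j) * u j else 0) atTop (𝓝 (∑' j, (if Even j then a else b) * u j)) := by
    refine tendsto_tsum_of_dominated_convergence (hu.mul_left C) (fun j => ?_)
      (Eventually.of_forall fun r j => ?_)
    · have hlim : Tendsto (fun r : ℕ => f (2 * r + 2 - j)) atTop
          (𝓝 (if Even j then a else b)) := by
        rcases Nat.even_or_odd' j with ⟨i, rfl | rfl⟩
        · rw [if_pos (even_two_mul i)]
          refine (ha.comp (tendsto_sub_atTop_nat i |>.comp (tendsto_add_atTop_nat 1))).congr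
            fun r => ?_
          simp only [Function.comp]
          congr 1
          omega
        · rw [if_neg (by simp)]
          refine (hb.comp (tendsto_sub_atTop_nat i)).congr' ?_
          filter_upwards [eventually_ge_atTop i] with r hr
          simp only [Function.comp]
          congr 1
          omega
      refine (hlim.mul_const (u j)).congr' ?_
      filter_upwards [eventually_ge_atTop j] with r hr
      rw [if_pos (mem_range.2 (by omega))]
    · split_ifs
      · rw [Real.norm_eq_abs, abs_mul]
        exact mul_le_mul_of_nonneg_right (hC _) (abs_nonneg _)
      · rw [norm_zero]
        positivity
  refine key.congr fun r => ?_
  rw [tsum_eq_sum (s := range (2 * r + 3)) fun j hj => if_neg hj]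
  exact sum_congr rfl fun j hj => if_pos hj

/-- If the first differences of `p` are antitone and their alternating series converges to `W`,
then the second difference `u` is absolutely summable, with `∑ u j = 0` and
`∑ (-1) ^ j u j = 2 W`; the weighted sum below combines the two. -/
lemma hasSum_kernel (p : ℕ → ℝ) (hp : p 0 = 0) (W a b : ℝ)
    (hanti : Antitone fun n => p (n + 1) - p n)
    (hW : Tendsto (fun N : ℕ => ∑ n ∈ range N, (-1 : ℝ) ^ n * (p (n + 1) - p n)) atTop (𝓝 W)) :
    (Summable fun j => |kerDiff p j|) ∧
      ∑' j, (if Even j then a else b) * kerDiff p j = (a - b) * W := by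
  have hu0 : kerDiff p 0 = p 1 - p 0 := by simp [kerDiff, hp]
  have hus (j : ℕ) : kerDiff p (j + 1) = (p (j + 2) - p (j + 1)) - (p (j + 1) - p j) := by
    simp only [kerDiff, Nat.add_sub_cancel]
    ring
  -- The terms of a convergent series tend to zero.
  have hw : Tendsto (fun n => p (n + 1) - p n) atTop (𝓝 0) := by
    have h := (((tendsto_add_atTop_iff_nat 1).2 hW).sub hW).abs
    rw [sub_self, abs_zero] at h
    refine (tendsto_zero_iff_abs_tendsto_zero _).2 (h.congr fun n => ?_)
    simp [sum_range_succ, abs_mul]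
  have hsum1 (N : ℕ) : ∑ j ∈ range (N + 1), kerDiff p j = p (N + 1) - p N := by
    induction N with
    | zero => simp [hu0]
    | succ N ih => rw [sum_range_succ, ih, hus]; ring
  have hsum2 (N : ℕ) : ∑ j ∈ range (N + 1), (-1 : ℝ) ^ j * kerDiff p j
      = ∑ n ∈ range (N + 1), (-1 : ℝ) ^ n * (p (n + 1) - p n)
        + ∑ n ∈ range N, (-1 : ℝ) ^ n * (p (n + 1) - p n) := by
    induction N with
    | zero => simp [hu0]
    | succ N ih =>
      rw [sum_range_succ, ih, hus, sum_range_succ _ (N + 1), sum_range_succ _ N]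
      ring
  have hneg (j : ℕ) : 0 ≤ -kerDiff p (j + 1) := by
    have := hanti (Nat.le_succ j)
    simp only [Nat.succ_eq_add_one] at this
    rw [hus]
    linarith
  have habs : Summable fun j => |kerDiff p j| := by
    rw [← summable_nat_add_iff 1]
    have : HasSum (fun j => -kerDiff p (j + 1)) (p 1 - p 0) := by
      rw [hasSum_iff_tendsto_nat_of_nonneg hneg]
      have h := hw.const_sub (p 1 - p 0)
      rw [sub_zero] at h
      refine h.congr fun N => ?_
      have := hsum1 N
      rw [sum_range_succ', hu0] at this
      rw [sum_neg_distrib]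
      linarith
    refine this.summable.congr fun j => ?_
    rw [← abs_neg, abs_of_nonneg (hneg j)]
  refine ⟨habs, ?_⟩
  have hs : Summable fun j => (if Even j then a else b) * kerDiff p j := by
    refine Summable.of_norm_bounded (habs.mul_left (max |a| |b|)) fun j => ?_
    rw [Real.norm_eq_abs, abs_mul]
    refine mul_le_mul_of_nonneg_right ?_ (abs_nonneg _)
    split_ifs
    · exact le_max_left _ _
    · exact le_max_right _ _
  refine tendsto_nhds_unique ((tendsto_add_atTop_iff_nat 1).2 hs.hasSum.tendsto_sum_nat) ?_
  have h := (hw.const_mul ((a + b) / 2)).add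
    ((((tendsto_add_atTop_iff_nat 1).2 hW).add hW).const_mul ((a - b) / 2))
  rw [show (a + b) / 2 * 0 + (a - b) / 2 * (W + W) = (a - b) * W by ring] at h
  refine h.congr fun N => ?_
  rw [← hsum1, ← hsum2, mul_sum, mul_sum, ← sum_add_distrib]
  refine sum_congr rfl fun j _ => ?_
  rcases Nat.even_or_odd j with hj | hj
  · rw [if_pos hj, hj.neg_one_pow]; ring
  · rw [if_neg (Nat.not_even_iff_odd.2 hj), hj.neg_one_pow]; ring

/-- Concavity of `t ↦ t ^ s` on `[0, ∞)` makes its unit increments decrease. -/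
lemma antitone_rpow_diff (s : ℝ) (h0 : 0 ≤ s) (h1 : s ≤ 1) :
    Antitone fun n : ℕ => ((n + 1 : ℕ) : ℝ) ^ s - (n : ℝ) ^ s := by
  refine antitone_nat_of_succ_le fun n => ?_
  have h := (Real.concaveOn_rpow h0 h1).2
    (show (n : ℝ) ∈ Set.Ici (0 : ℝ) from Set.mem_Ici.2 (by positivity))
    (show ((n + 1 + 1 : ℕ) : ℝ) ∈ Set.Ici (0 : ℝ) from Set.mem_Ici.2 (by positivity))
    (show (0 : ℝ) ≤ 1 / 2 by norm_num) (show (0 : ℝ) ≤ 1 / 2 by norm_num) (by norm_num)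
  simp only [smul_eq_mul] at h
  rw [show 1 / 2 * (n : ℝ) + 1 / 2 * ((n + 1 + 1 : ℕ) : ℝ) = ((n + 1 : ℕ) : ℝ) by
    push_cast; ring] at h
  linarith

/-- For the Caputo universal fractional map of order `1 < α < 2` with power-law
memory kernel `U_α(n) = n^{α−1}`, an asymptotic period-2 sink `(x_o, x_e)` satisfies
`x_o − x_e = (h^α/(2Γ(α))) (G(x_o) − G(x_e)) W̃_α`, where
`W̃_α = Σ_{n=1}^∞ (−1)^{n+1}(n^{α−1}−(n−1)^{α−1})` (with `0^{α−1} = 0`). -/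
theorem period_two_difference_eq_order_gt_one (α h b₀ p₀ : ℝ)
    (h1 : 1 < α) (h2 : α < 2) (hh : 0 < h)
    (G : ℝ → ℝ) (hG : Continuous G) (x : ℕ → ℝ)
    (hx : ∀ n : ℕ, x (n + 1) = b₀ + p₀ * h * ((n : ℝ) + 1) -
      (h ^ α / Real.Gamma α) *
        ∑ k ∈ Finset.range (n + 1), G (x k) * (((n - k : ℕ) : ℝ) + 1) ^ (α - 1))
    (xo xe W : ℝ)
    (hW : Filter.Tendsto
      (fun N : ℕ => ∑ n ∈ Finset.range N,
        (-1 : ℝ) ^ n * (((n : ℝ) + 1) ^ (α - 1) - (n : ℝ) ^ (α - 1)))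
      Filter.atTop (nhds W))
    (ho : Filter.Tendsto (fun n : ℕ => x (2 * n + 1)) Filter.atTop (nhds xo))
    (he : Filter.Tendsto (fun n : ℕ => x (2 * n)) Filter.atTop (nhds xe)) :
    xo - xe = (h ^ α / (2 * Real.Gamma α)) * (G xo - G xe) * W := by
  set p : ℕ → ℝ := fun i => (i : ℝ) ^ (α - 1) with hpdef
  have hp : p 0 = 0 := by
    simp only [hpdef, Nat.cast_zero]
    exact Real.zero_rpow (by linarith)
  have hW' : Tendsto (fun N : ℕ => ∑ n ∈ range N, (-1 : ℝ) ^ n * (p (n + 1) - p n))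
      atTop (𝓝 W) := by
    simpa only [hpdef, Nat.cast_add, Nat.cast_one] using hW
  obtain ⟨hsum, hval⟩ := hasSum_kernel p hp W (G xe) (G xo)
    (antitone_rpow_diff (α - 1) (by linarith) (by linarith)) hW'
  have hR := tendsto_conv_even (kerDiff p) (fun k => G (x k)) (G xe) (G xo) hsum
    ((hG.tendsto xe).comp he) ((hG.tendsto xo).comp ho)
  rw [hval] at hR
  set c := h ^ α / Real.Gamma α with hc
  have hx' (n : ℕ) : x (n + 1) = b₀ + p₀ * h * ((n : ℝ) + 1) -
      c * ∑ k ∈ range (n + 1), G (x k) * p (n - k + 1) := by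
    simpa only [hpdef, Nat.cast_add, Nat.cast_one] using hx n
  have hdiff (n : ℕ) : x (n + 3) - 2 * x (n + 2) + x (n + 1)
      = -c * ∑ j ∈ range (n + 3), G (x (n + 2 - j)) * kerDiff p j := by
    rw [← second_diff_conv p (fun k => G (x k)) hp n, hx' (n + 2), hx' (n + 1), hx' n]
    push_cast
    ring
  have hL : Tendsto (fun r : ℕ => x (2 * r + 3) - 2 * x (2 * r + 2) + x (2 * r + 1)) atTop
      (𝓝 (xo - 2 * xe + xo)) :=
    (((tendsto_add_atTop_iff_nat 1).2 ho).sub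
      (((tendsto_add_atTop_iff_nat 1).2 he).const_mul 2)).add ho
  have heq := tendsto_nhds_unique hL
    ((hR.const_mul (-c)).congr fun r => (hdiff (2 * r)).symm)
  rw [show h ^ α / (2 * Real.Gamma α) = c / 2 by rw [hc, div_div, mul_comm]]
  linarith
end

section
/- Let 1 < α < 2, h > 0, b₀, p₀ ∈ ℝ, let G : ℝ → ℝ be continuous, and let x : ℕ → ℝ satisfy x_{n+1} = b₀ + p₀ · h · (n+1) − (h^α/Γ(α)) · Σ_{k=0}^{n} G(x_k) · (n−k+1)^{α−1} for all n ≥ 0. Suppose the odd subsequence x_{2n+1} converges to x_o and the even subsequence x_{2n} converges to x_e as n → ∞. Then G(x_o) + G(x_e) = 0. -/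
/-!
Evaluate the recursion at the odd times `n = 2m + 1`: its left side is bounded and the initial
terms are `O(m)`, so the memory sum `S_m` over `k ≤ 2m + 1` is `O(m)`. Pairing `k = 2j` with
`k = 2j + 1` and using that `t ↦ t ^ (α - 1)` grows by at most `1` on unit steps gives
`S_m = ∑_{j ≤ m} u_j (2 (m - j) + 1) ^ (α - 1) + O(m)` with
`u_j = G (x_{2j}) + G (x_{2j+1}) → G x_o + G x_e`. A nonzero limit would make this sum grow like
`m ^ α`, which is not `O(m)` since `α > 1`; that is `not_linear_bound_of_tendsto_pos`, applied to
`u` or to `-u` according to the sign of the limit.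
-/

lemma sum_range_two_mul_eq_pairs (f : ℕ → ℝ) (M : ℕ) :
    ∑ k ∈ Finset.range (2 * M), f k = ∑ j ∈ Finset.range M, (f (2 * j) + f (2 * j + 1)) := by
  induction M with
  | zero => simp
  | succ M ih =>
    rw [show 2 * (M + 1) = 2 * M + 1 + 1 by ring, Finset.sum_range_succ, Finset.sum_range_succ,
      Finset.sum_range_succ, ih]
    ring

/-- The sum of the odd numbers' `β`-th powers grows superlinearly, for `β > 0`. -/
lemma not_linear_bound_sum_rpow (β : ℝ) (hβ : 0 < β) (C : ℝ)
    (h : ∀ m : ℕ, ∑ i ∈ Finset.range (m + 1), (2 * (i : ℝ) + 1) ^ β ≤ C * ((m : ℝ) + 1)) :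
    False := by
  have ht : Filter.Tendsto (fun K : ℕ => (K : ℝ) ^ β) Filter.atTop Filter.atTop :=
    (tendsto_rpow_atTop hβ).comp tendsto_natCast_atTop_atTop
  obtain ⟨K, hK⟩ := (ht.eventually_gt_atTop (2 * |C|)).exists
  have hm := h (2 * K)
  -- Only the upper half `K ≤ i ≤ 2K` of the sum is needed.
  have hlow : ((K : ℝ) + 1) * (K : ℝ) ^ β ≤
      ∑ i ∈ Finset.range (2 * K + 1), (2 * (i : ℝ) + 1) ^ β := by
    rw [show 2 * K + 1 = K + (K + 1) by ring, Finset.sum_range_add]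
    have h1 : 0 ≤ ∑ i ∈ Finset.range K, (2 * (i : ℝ) + 1) ^ β :=
      Finset.sum_nonneg fun i _ => by positivity
    have h2 : ∑ _i ∈ Finset.range (K + 1), (K : ℝ) ^ β ≤
        ∑ i ∈ Finset.range (K + 1), (2 * ((K + i : ℕ) : ℝ) + 1) ^ β := by
      refine Finset.sum_le_sum fun i _ => Real.rpow_le_rpow (by positivity) ?_ hβ.le
      push_cast
      have : (0 : ℝ) ≤ i := by positivity
      have : (0 : ℝ) ≤ K := by positivity
      linarith
    simp only [Finset.sum_const, Finset.card_range, nsmul_eq_mul] at h2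
    push_cast at h2 ⊢
    linarith
  push_cast at hm
  have hK0 : (0 : ℝ) ≤ K := by positivity
  nlinarith [le_abs_self C, abs_nonneg C,
    mul_lt_mul_of_pos_left hK (by positivity : (0 : ℝ) < (K : ℝ) + 1),
    mul_le_mul_of_nonneg_right (le_abs_self C) (by positivity : (0 : ℝ) ≤ 2 * (K : ℝ) + 1)]

/-- Convolving the weights `(2 i + 1) ^ β` with a sequence of positive limit cannot give
linear growth: the finitely many early terms contribute `O(m)`, because `β ≤ 1`, and the
others are bounded below by a positive multiple of the weights. -/
lemma not_linear_bound_of_tendsto_pos (β : ℝ) (hβ : 0 < β) (hβ1 : β ≤ 1) (u : ℕ → ℝ) (c : ℝ)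
    (hc : 0 < c) (hu : Filter.Tendsto u Filter.atTop (nhds c)) (C : ℝ)
    (h : ∀ m : ℕ, ∑ j ∈ Finset.range (m + 1), u j * (2 * ((m - j : ℕ) : ℝ) + 1) ^ β
      ≤ C * ((m : ℝ) + 1)) : False := by
  obtain ⟨J, hJ⟩ := Filter.eventually_atTop.1 (hu.eventually (Ici_mem_nhds (half_lt_self hc)))
  -- `d j` is the amount by which the early terms may fall below `c / 2`.
  set d : ℕ → ℝ := fun j => if j < J then |u j - c / 2| else 0 with hd
  have hd0 : ∀ j, 0 ≤ d j := fun j => by simp only [hd]; split_ifs <;> positivity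
  have hdu : ∀ j, c / 2 ≤ u j + d j := fun j => by
    simp only [hd]
    split_ifs with hj
    · linarith [neg_abs_le (u j - c / 2)]
    · linarith [hJ j (not_lt.1 hj)]
  have hdsum : ∀ m : ℕ, ∑ j ∈ Finset.range m, d j ≤ ∑ j ∈ Finset.range J, d j := fun m => by
    rw [← Finset.sum_filter_add_sum_filter_not (Finset.range m) (fun j => j < J)]
    have hz : ∑ j ∈ (Finset.range m).filter (fun j => ¬ j < J), d j = 0 :=
      Finset.sum_eq_zero fun j hj => by simp [hd, (Finset.mem_filter.1 hj).2]
    rw [hz, add_zero]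
    exact Finset.sum_le_sum_of_subset_of_nonneg
      (fun j hj => Finset.mem_range.2 (Finset.mem_filter.1 hj).2) fun j _ _ => hd0 j
  set D := ∑ j ∈ Finset.range J, d j
  have hD : 0 ≤ D := Finset.sum_nonneg fun j _ => hd0 j
  refine not_linear_bound_sum_rpow β hβ ((C + 2 * D) / (c / 2)) fun m => ?_
  rw [div_mul_eq_mul_div, le_div_iff₀ (half_pos hc)]
  have hrefl : ∑ i ∈ Finset.range (m + 1), (2 * (i : ℝ) + 1) ^ β =
      ∑ j ∈ Finset.range (m + 1), (2 * ((m - j : ℕ) : ℝ) + 1) ^ β := by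
    rw [← Finset.sum_range_reflect]
    simp
  have hw : ∀ j : ℕ, (2 * ((m - j : ℕ) : ℝ) + 1) ^ β ≤ 2 * ((m : ℝ) + 1) := fun j => by
    have hle : ((m - j : ℕ) : ℝ) ≤ m := by exact_mod_cast Nat.sub_le m j
    have h0 : (0 : ℝ) ≤ ((m - j : ℕ) : ℝ) := by positivity
    calc (2 * ((m - j : ℕ) : ℝ) + 1) ^ β ≤ (2 * ((m - j : ℕ) : ℝ) + 1) ^ (1 : ℝ) :=
          Real.rpow_le_rpow_of_exponent_le (by linarith) hβ1
      _ ≤ 2 * ((m : ℝ) + 1) := by rw [Real.rpow_one]; linarith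
  rw [hrefl, Finset.sum_mul]
  calc ∑ j ∈ Finset.range (m + 1), (2 * ((m - j : ℕ) : ℝ) + 1) ^ β * (c / 2)
      ≤ ∑ j ∈ Finset.range (m + 1), (u j * (2 * ((m - j : ℕ) : ℝ) + 1) ^ β
          + d j * (2 * ((m : ℝ) + 1))) := by
        refine Finset.sum_le_sum fun j _ => ?_
        have hp : 0 ≤ (2 * ((m - j : ℕ) : ℝ) + 1) ^ β := by positivity
        nlinarith [mul_le_mul_of_nonneg_left (hdu j) hp,
          mul_le_mul_of_nonneg_left (hw j) (hd0 j)]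
    _ ≤ C * ((m : ℝ) + 1) + D * (2 * ((m : ℝ) + 1)) := by
        rw [Finset.sum_add_distrib, ← Finset.sum_mul]
        gcongr
        · exact h m
        · exact hdsum _
    _ = (C + 2 * D) * ((m : ℝ) + 1) := by ring

lemma exists_abs_le_of_tendsto {f : ℕ → ℝ} {a : ℝ}
    (hf : Filter.Tendsto f Filter.atTop (nhds a)) : ∃ B, ∀ n, |f n| ≤ B := by
  obtain ⟨B, hB⟩ := (Metric.isBounded_range_of_tendsto f hf).exists_norm_le
  exact ⟨B, fun n => hB _ ⟨n, rfl⟩⟩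

/-- For the Caputo universal fractional map of order `1 < α < 2` with power-law
memory kernel `U_α(n) = n^{α−1}`, an asymptotic period-2 sink `(x_o, x_e)` satisfies
`G(x_o) + G(x_e) = 0`. -/
theorem period_two_sum_eq_zero_order_gt_one (α h b₀ p₀ : ℝ)
    (h1 : 1 < α) (h2 : α < 2) (hh : 0 < h)
    (G : ℝ → ℝ) (hG : Continuous G) (x : ℕ → ℝ)
    (hx : ∀ n : ℕ, x (n + 1) = b₀ + p₀ * h * ((n : ℝ) + 1) -
      (h ^ α / Real.Gamma α) *
        ∑ k ∈ Finset.range (n + 1), G (x k) * (((n - k : ℕ) : ℝ) + 1) ^ (α - 1))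
    (xo xe : ℝ)
    (ho : Filter.Tendsto (fun n : ℕ => x (2 * n + 1)) Filter.atTop (nhds xo))
    (he : Filter.Tendsto (fun n : ℕ => x (2 * n)) Filter.atTop (nhds xe)) :
    G xo + G xe = 0 := by
  have hβ : 0 < α - 1 := by linarith
  have hβ1 : α - 1 ≤ 1 := by linarith
  obtain ⟨X, hX⟩ := exists_abs_le_of_tendsto he
  have hGe := (hG.tendsto xe).comp he
  have hGo := (hG.tendsto xo).comp ho
  obtain ⟨B, hB⟩ := exists_abs_le_of_tendsto hGe
  simp only [Function.comp_def] at hB hGe hGo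
  have hA : 0 < h ^ α / Real.Gamma α :=
    div_pos (Real.rpow_pos_of_pos hh α) (Real.Gamma_pos_of_pos (by linarith))
  set A := h ^ α / Real.Gamma α
  set u : ℕ → ℝ := fun j => G (x (2 * j)) + G (x (2 * j + 1)) with hu_def
  have hu : Filter.Tendsto u Filter.atTop (nhds (G xo + G xe)) := by
    rw [add_comm (G xo)]
    exact hGe.add hGo
  have hX0 : 0 ≤ X := (abs_nonneg _).trans (hX 0)
  -- The pair-sum differs from the memory sum by at most `B` per pair.
  have key : ∀ m : ℕ, |∑ j ∈ Finset.range (m + 1),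
      u j * (2 * ((m - j : ℕ) : ℝ) + 1) ^ (α - 1)| ≤
      ((|b₀| + 2 * |p₀ * h| + X) / A + B) * ((m : ℝ) + 1) := by
    intro m
    have hm0 : (0 : ℝ) ≤ m := by positivity
    have hxm := hx (2 * m + 1)
    set S := ∑ k ∈ Finset.range (2 * m + 1 + 1),
      G (x k) * (((2 * m + 1 - k : ℕ) : ℝ) + 1) ^ (α - 1) with hS_def
    have hSbound : |S| ≤ (|b₀| + 2 * |p₀ * h| + X) / A * ((m : ℝ) + 1) := by
      rw [div_mul_eq_mul_div, le_div_iff₀ hA, ← abs_of_pos hA, ← abs_mul]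
      have hxb : |x (2 * m + 1 + 1)| ≤ X := hX (m + 1)
      have hSA : S * A = b₀ + (p₀ * h) * (2 * ((m : ℝ) + 1)) - x (2 * m + 1 + 1) := by
        rw [hxm]; push_cast; ring
      have hpb : |(p₀ * h) * (2 * ((m : ℝ) + 1))| = |p₀ * h| * (2 * ((m : ℝ) + 1)) := by
        rw [abs_mul, abs_of_nonneg (by positivity : (0 : ℝ) ≤ 2 * ((m : ℝ) + 1))]
      rw [hSA]
      have t1 := abs_sub (b₀ + (p₀ * h) * (2 * ((m : ℝ) + 1))) (x (2 * m + 1 + 1))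
      have t2 := abs_add_le b₀ ((p₀ * h) * (2 * ((m : ℝ) + 1)))
      nlinarith [mul_nonneg (abs_nonneg b₀) hm0, mul_nonneg hX0 hm0]
    have hpair : ∑ j ∈ Finset.range (m + 1), u j * (2 * ((m - j : ℕ) : ℝ) + 1) ^ (α - 1) =
        S - ∑ j ∈ Finset.range (m + 1), G (x (2 * j)) *
          ((2 * ((m - j : ℕ) : ℝ) + 1 + 1) ^ (α - 1)
            - (2 * ((m - j : ℕ) : ℝ) + 1) ^ (α - 1)) := by
      rw [hS_def, show 2 * m + 1 + 1 = 2 * (m + 1) by ring, sum_range_two_mul_eq_pairs,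
        ← Finset.sum_sub_distrib]
      refine Finset.sum_congr rfl fun j hj => ?_
      have hjm : j ≤ m := Nat.lt_succ_iff.1 (Finset.mem_range.1 hj)
      rw [show 2 * m + 1 - 2 * j = 2 * (m - j) + 1 by omega,
        show 2 * m + 1 - (2 * j + 1) = 2 * (m - j) by omega]
      simp only [hu_def, Nat.cast_add, Nat.cast_mul, Nat.cast_one, Nat.cast_ofNat]
      ring
    have herr : |∑ j ∈ Finset.range (m + 1), G (x (2 * j)) *
          ((2 * ((m - j : ℕ) : ℝ) + 1 + 1) ^ (α - 1)
            - (2 * ((m - j : ℕ) : ℝ) + 1) ^ (α - 1))| ≤ B * ((m : ℝ) + 1) := by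
      refine (Finset.abs_sum_le_sum_abs _ _).trans ?_
      have hle : ∀ j ∈ Finset.range (m + 1), |G (x (2 * j)) *
          ((2 * ((m - j : ℕ) : ℝ) + 1 + 1) ^ (α - 1)
            - (2 * ((m - j : ℕ) : ℝ) + 1) ^ (α - 1))| ≤ B := by
        intro j _
        have h0 : (0 : ℝ) ≤ 2 * ((m - j : ℕ) : ℝ) + 1 := by positivity
        have hsub := Real.rpow_add_le_add_rpow h0 zero_le_one hβ.le hβ1
        rw [Real.one_rpow] at hsub
        have hmono := Real.rpow_le_rpow h0 (le_add_of_nonneg_right zero_le_one) hβ.le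
        rw [abs_mul]
        have hdiff : |(2 * ((m - j : ℕ) : ℝ) + 1 + 1) ^ (α - 1)
            - (2 * ((m - j : ℕ) : ℝ) + 1) ^ (α - 1)| ≤ 1 := by
          rw [abs_of_nonneg (sub_nonneg.2 hmono)]
          linarith
        exact (mul_le_of_le_one_right (abs_nonneg _) hdiff).trans (hB j)
      refine (Finset.sum_le_card_nsmul _ _ _ hle).trans (le_of_eq ?_)
      rw [Finset.card_range, nsmul_eq_mul]
      push_cast
      ring
    rw [hpair, add_mul]
    exact (abs_sub _ _).trans (add_le_add hSbound herr)
  rcases lt_trichotomy (G xo + G xe) 0 with hneg | hzero | hpos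
  · refine (not_linear_bound_of_tendsto_pos (α - 1) hβ hβ1 (fun j => -u j) _
      (neg_pos.2 hneg) hu.neg ((|b₀| + 2 * |p₀ * h| + X) / A + B) fun m => ?_).elim
    simp only [neg_mul, Finset.sum_neg_distrib]
    exact (neg_le_abs _).trans (key m)
  · exact hzero
  · exact (not_linear_bound_of_tendsto_pos (α - 1) hβ hβ1 u _ hpos hu _
      fun m => (le_abs_self _).trans (key m)).elim
end

section
/- Let c > 0 and K > 0 satisfy (K−1)² ≥ c², and define G(x) = x − K·x·(1−x), D = √((K−1)² − c²), x_o = (c + K − 1 + D)/(2K), and x_e = (c + K − 1 − D)/(2K). Then G(x_o) + G(x_e) = 0 and c·(x_o − x_e) = G(x_o) − G(x_e). -/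
/-!
Since `G x = (1 - K) x + K x²`, the difference `G xo - G xe` is `xo - xe` times
`1 - K + K (xo + xe)`, and the sum of the coordinates makes this factor equal to `c`.
With that sum fixed, `G xo + G xe` equals `(D² - ((K - 1)² - c²)) / (2K)`, which vanishes by the
choice of `D`; the bound `c² ≤ (K - 1)²` ensures that the square root squares back to its argument.
-/

/-- Explicit coordinates of the asymptotic period-2 sink of the logistic α-family:
with `G(x) = x − Kx(1−x)`, `D = √((K−1)²−c²)`, `x_o = (c+K−1+D)/(2K)`,
`x_e = (c+K−1−D)/(2K)`, one has `G(x_o)+G(x_e) = 0` and `c(x_o−x_e) = G(x_o)−G(x_e)`. -/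
theorem logistic_period_two_coordinates (c K D xo xe : ℝ) (G : ℝ → ℝ)
    (hc : 0 < c) (hK : 0 < K) (hKc : c ^ 2 ≤ (K - 1) ^ 2)
    (hG : ∀ x, G x = x - K * x * (1 - x))
    (hD : D = Real.sqrt ((K - 1) ^ 2 - c ^ 2))
    (hxo : xo = (c + K - 1 + D) / (2 * K))
    (hxe : xe = (c + K - 1 - D) / (2 * K)) :
    G xo + G xe = 0 ∧ c * (xo - xe) = G xo - G xe := by
  have hD2 : D ^ 2 = (K - 1) ^ 2 - c ^ 2 := by
    rw [hD, Real.sq_sqrt (sub_nonneg.mpr hKc)]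
  have hK0 : K ≠ 0 := hK.ne'
  constructor
  · have h : G xo + G xe = (D ^ 2 - ((K - 1) ^ 2 - c ^ 2)) / (2 * K) := by
      rw [hG, hG, hxo, hxe]
      field_simp
      ring
    rw [h, hD2, sub_self, zero_div]
  · have hs : K * (xo + xe) = c + K - 1 := by
      rw [hxo, hxe]
      field_simp
      ring
    rw [hG, hG]
    linear_combination (-(xo - xe)) * hs
end

section
/- Let c > 0 and K > 0, and define G(x) = x − K·x·(1−x). There exist real numbers x_o ≠ x_e with G(x_o) + G(x_e) = 0 and c·(x_o − x_e) = G(x_o) − G(x_e) if and only if (K−1)² > c². -/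
/-!
Write `s = xo + xe` and `d = xo - xe`. For `d ≠ 0` the difference equation says `K s = c + K - 1`.
Substituting this in the sum equation turns it into `(K d)² = (K - 1)² - c²`, which has a solution
with `d ≠ 0` exactly when the right-hand side is positive.
-/


/-- Existence criterion for the period-2 sink of the logistic α-family: with
`G(x) = x − Kx(1−x)`, `c > 0`, `K > 0`, the system `G(x_o)+G(x_e) = 0`,
`c(x_o−x_e) = G(x_o)−G(x_e)` has a solution with `x_o ≠ x_e` iff `(K−1)² > c²`. -/
theorem logistic_period_two_exists_iff (c K : ℝ) (hc : 0 < c) (hK : 0 < K)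
    (G : ℝ → ℝ) (hG : ∀ x, G x = x - K * x * (1 - x)) :
    (∃ xo xe : ℝ, xo ≠ xe ∧ G xo + G xe = 0 ∧ c * (xo - xe) = G xo - G xe) ↔
      c ^ 2 < (K - 1) ^ 2 := by
  simp only [hG]
  constructor
  · rintro ⟨xo, xe, hne, hsum, hdiff⟩
    have hd : xo - xe ≠ 0 := sub_ne_zero.mpr hne
    have hs : K * (xo + xe) = c + K - 1 :=
      mul_right_cancel₀ hd (by linear_combination -hdiff)
    have key : (K * (xo - xe)) ^ 2 = (K - 1) ^ 2 - c ^ 2 := by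
      linear_combination 2 * K * hsum - (K * (xo + xe) + c - K + 1) * hs
    have hpos : 0 < (K * (xo - xe)) ^ 2 := by positivity
    linarith
  · intro h
    have hr : 0 < √((K - 1) ^ 2 - c ^ 2) := Real.sqrt_pos.mpr (by linarith)
    have hr2 : √((K - 1) ^ 2 - c ^ 2) ^ 2 = (K - 1) ^ 2 - c ^ 2 :=
      Real.sq_sqrt (by linarith)
    set r := √((K - 1) ^ 2 - c ^ 2)
    refine ⟨(c + K - 1 + r) / (2 * K), (c + K - 1 - r) / (2 * K), ?_, ?_, ?_⟩
    · intro heq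
      have := (div_left_inj' (by positivity : 2 * K ≠ 0)).mp heq
      linarith
    · field_simp
      linear_combination 2 * hr2
    · field_simp
      ring
end
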